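/- There exists an absolute constant c₁ > 0 such that the following holds: for every β with 0 < β ≤ 2, every probability space (Ω, μ), and every random variable g : Ω → ℝ with E|g|² < ∞, one has E|g − E g|² ≥ c₁ · E|g|² − 2^{1/β} · |E[|g|^β · sgn(g)]|^{2/β}. -/

import Mathlib

open MeasureTheory Real

lemma pw1 (β t : ℝ) (hβ : 0 < β) (hβ2 : β ≤ 2) :
    (1/2:ℝ)^β * (1 - 8 * (t-1)^2) ≤ |t|^β * Real.sign t := by
  have hp : (0:ℝ) < (1/2:ℝ)^β := by positivity
  rcases lt_trichotomy t 0 with h | h | h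
  · rw [Real.sign_of_neg h]
    have h4 : (1/4:ℝ) ≤ (1/2:ℝ)^β := by
      have := Real.rpow_le_rpow_of_exponent_ge (x := (1/2:ℝ)) (by norm_num) (by norm_num) hβ2
      norm_num at this ⊢
      linarith
    have h5 : |t|^β ≤ (1-t)^2 := by
      rw [abs_of_neg h]
      calc (-t)^β ≤ (1-t)^β := Real.rpow_le_rpow (by linarith) (by linarith) hβ.le
        _ ≤ (1-t)^(2:ℝ) := Real.rpow_le_rpow_of_exponent_le (by linarith) hβ2
        _ = _ := by norm_num
    have h6 : 1 ≤ (1-t)^2 := by nlinarith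
    nlinarith [mul_le_mul_of_nonneg_right h4 (by nlinarith : 0 ≤ 8 * (t-1)^2 - 1)]
  · subst h
    simp
    norm_num
    positivity
  · rw [Real.sign_of_pos h, abs_of_pos h, mul_one]
    rcases le_total (1/2) t with h2 | h2
    · calc _ ≤ (1/2:ℝ)^β := by nlinarith [mul_nonneg hp.le (sq_nonneg (t-1))]
        _ ≤ _ := Real.rpow_le_rpow (by norm_num) h2 hβ.le
    · have : 0 ≤ t^β := by positivity
      nlinarith [mul_nonneg hp.le (by nlinarith : 0 ≤ 8 * (t-1)^2 - 1)]

lemma pw2 (β m x : ℝ) (hβ : 0 < β) (hβ2 : β ≤ 2) (hm : 0 < m) :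
    (m/2)^β * (1 - 8 / m^2 * (x-m)^2) ≤ |x|^β * Real.sign x := by
  have h := pw1 β (x/m) hβ hβ2
  have e1 : (m/2)^β = m^β * (1/2)^β := by
    rw [← Real.mul_rpow hm.le (by norm_num)]; ring_nf
  have e2 : |x|^β = m^β * |x/m|^β := by
    rw [← Real.mul_rpow hm.le (by positivity), abs_div, abs_of_pos hm]
    congr 1; field_simp
  have e3 : Real.sign (x/m) = Real.sign x := by
    rcases lt_trichotomy x 0 with h | h | h
    · rw [Real.sign_of_neg h, Real.sign_of_neg (div_neg_of_neg_of_pos h hm)]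
    · simp [h]
    · rw [Real.sign_of_pos h, Real.sign_of_pos (div_pos h hm)]
  have e4 : 8 / m^2 * (x-m)^2 = 8 * (x/m-1)^2 := by field_simp
  rw [e1, e2, e4, ← e3, mul_assoc, mul_assoc]
  exact mul_le_mul_of_nonneg_left h (by positivity)

lemma meas_sgn : Measurable Real.sign := by
  have : Real.sign = fun r : ℝ => if r < 0 then (-1:ℝ) else if 0 < r then 1 else 0 := by
    funext r; rfl
  rw [this]
  exact Measurable.ite measurableSet_Iio measurable_const
    (Measurable.ite measurableSet_Ioi measurable_const measurable_const)

lemma sgn_int {Ω : Type} [MeasurableSpace Ω] (μ : Measure Ω) [IsProbabilityMeasure μ]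
    (β : ℝ) (hβ : 0 < β) (hβ2 : β ≤ 2) (g : Ω → ℝ) (hg : MemLp g 2 μ) :
    Integrable (fun ω => |g ω| ^ β * Real.sign (g ω)) μ := by
  have hi : Integrable (fun ω => 1 + (g ω)^2) μ := (integrable_const _).add hg.integrable_sq
  refine hi.mono' ?_ ?_
  · have h1 : Measurable (fun x : ℝ => |x|^β * Real.sign x) := by
      have := meas_sgn
      fun_prop
    exact (h1.comp_aemeasurable hg.1.aemeasurable).aestronglyMeasurable
  · refine Filter.Eventually.of_forall fun ω => ?_
    have hs : |Real.sign (g ω)| ≤ 1 := by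
      rcases Real.sign_apply_eq (g ω) with h | h | h <;> simp [h]
    have hp : 0 ≤ |g ω|^β := by positivity
    rw [Real.norm_eq_abs, abs_mul, abs_of_nonneg hp]
    have h2 : |g ω|^β ≤ 1 + (g ω)^2 := by
      rcases le_total (|g ω|) 1 with h | h
      · nlinarith [Real.rpow_le_one (abs_nonneg _) h hβ.le, sq_nonneg (g ω)]
      · have := Real.rpow_le_rpow_of_exponent_le h hβ2
        norm_num at this
        linarith
    nlinarith

lemma main_pos {Ω : Type} [MeasurableSpace Ω] (μ : Measure Ω) [IsProbabilityMeasure μ]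
    (β : ℝ) (hβ : 0 < β) (hβ2 : β ≤ 2) (g : Ω → ℝ) (hg : MemLp g 2 μ)
    (hm : 0 ≤ ∫ ω, g ω ∂μ) :
    (∫ ω, (g ω - ∫ ω', g ω' ∂μ) ^ 2 ∂μ) ≥
              (1/64) * (∫ ω, (g ω) ^ 2 ∂μ) -
                (2 : ℝ) ^ (1 / β) * |∫ ω, |g ω| ^ β * Real.sign (g ω) ∂μ| ^ (2 / β) := by
  have hgi : Integrable g μ := hg.integrable (by norm_num)
  have hV : ∫ ω, (g ω - ∫ ω', g ω' ∂μ) ^ 2 ∂μ = (∫ ω, (g ω) ^ 2 ∂μ) - (∫ ω, g ω ∂μ)^2 := by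
    rw [← ProbabilityTheory.variance_eq_integral hg.1.aemeasurable,
      ProbabilityTheory.variance_eq_sub hg]
    rfl
  have hSi : Integrable (fun ω => (g ω - ∫ ω', g ω' ∂μ)^2) μ :=
    (hg.sub (memLp_const _)).integrable_sq
  have hV0 : 0 ≤ ∫ ω, (g ω - ∫ ω', g ω' ∂μ) ^ 2 ∂μ := integral_nonneg fun ω => sq_nonneg _
  have hI := sgn_int μ β hβ hβ2 g hg
  generalize hmm : ∫ ω, g ω ∂μ = m at *
  generalize hVV : ∫ ω, (g ω - m) ^ 2 ∂μ = V at *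
  have hR : 0 ≤ (2 : ℝ) ^ (1 / β) * |∫ ω, |g ω| ^ β * Real.sign (g ω) ∂μ| ^ (2 / β) := by
    positivity
  have hG : ∫ ω, (g ω) ^ 2 ∂μ = V + m^2 := by linarith
  rw [hG]
  rcases le_or_gt (m^2) (32 * V) with h | h
  · linarith
  have hm0 : 0 < m := by
    rcases hm.eq_or_lt with h0 | h0
    · subst h0; linarith
    · exact h0
  have key : (m/2)^β * (1 - 8/m^2 * V) ≤ ∫ ω, |g ω| ^ β * Real.sign (g ω) ∂μ := by
    have := integral_mono (μ := μ) (f := fun ω => (m/2)^β * (1 - 8 / m^2 * (g ω-m)^2))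
      (((integrable_const _).sub (hSi.const_mul _)).const_mul _) hI
      (fun ω => pw2 β m (g ω) hβ hβ2 hm0)
    rw [integral_const_mul, integral_sub (integrable_const _) (hSi.const_mul _),
      integral_const_mul, hVV] at this
    simpa using this
  generalize (∫ ω, |g ω| ^ β * Real.sign (g ω) ∂μ) = I at *
  have hp : 0 < (m/2)^β := by positivity
  have h8 : 8 / m^2 * V ≤ 1/4 := by
    rw [div_mul_eq_mul_div, div_le_iff₀ (by positivity)]; linarith
  have hI2 : (m/2)^β * (3/4) ≤ I := by nlinarith
  have hI0 : 0 ≤ I := by nlinarith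
  have hfin : m^2/4 ≤ (2 : ℝ) ^ (1 / β) * |I| ^ (2 / β) := by
    have e1 : (2 : ℝ) ^ (1 / β) * |I| ^ (2 / β) = (2 * I^2)^(1/β) := by
      rw [Real.mul_rpow (by norm_num) (by positivity), abs_of_nonneg hI0]
      congr 1
      rw [← Real.rpow_natCast, ← Real.rpow_mul hI0]
      congr 1; push_cast; ring
    have e2 : m^2/4 = (((m/2)^β)^2)^(1/β) := by
      rw [← Real.rpow_natCast ((m/2)^β), ← Real.rpow_mul (by positivity), ← Real.rpow_mul (by positivity)]
      have : β * (((2:ℕ):ℝ) * (1/β)) = ((2:ℕ):ℝ) := by field_simp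
      rw [this, Real.rpow_natCast]; ring
    rw [e1, e2]
    exact Real.rpow_le_rpow (by positivity) (by nlinarith) (by positivity)
  nlinarith

/-- Poincaré-type lemma on a general probability space: there is an absolute
constant `c₁ > 0` such that for every `0 < β ≤ 2` and every square-integrable
random variable `g`,
`E|g - Eg|² ≥ c₁ E|g|² - 2^{1/β} |E[|g|^β sgn g]|^{2/β}`. -/
theorem stmt0 :
    ∃ c₁ : ℝ, 0 < c₁ ∧
      ∀ (Ω : Type) (_ : MeasurableSpace Ω) (μ : Measure Ω), IsProbabilityMeasure μ →
        ∀ β : ℝ, 0 < β → β ≤ 2 →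
          ∀ g : Ω → ℝ, MemLp g 2 μ →
            (∫ ω, (g ω - ∫ ω', g ω' ∂μ) ^ 2 ∂μ) ≥
              c₁ * (∫ ω, (g ω) ^ 2 ∂μ) -
                (2 : ℝ) ^ (1 / β) * |∫ ω, |g ω| ^ β * Real.sign (g ω) ∂μ| ^ (2 / β) := by
  refine ⟨1/64, by norm_num, ?_⟩
  intro Ω _ μ _ β hβ hβ2 g hg
  rcases le_total 0 (∫ ω, g ω ∂μ) with h | h
  · exact main_pos μ β hβ hβ2 g hg h
  · have := main_pos μ β hβ hβ2 (fun ω => - g ω) hg.neg (by rw [integral_neg]; linarith)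
    have e : ∀ ω, (-g ω - -∫ ω', g ω' ∂μ)^2 = (g ω - ∫ ω', g ω' ∂μ)^2 := fun ω => by ring
    simpa only [integral_neg, abs_neg, Real.sign_neg, mul_neg, neg_sq, e] using this
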